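/- Let b ≥ 2 and ℓ ≥ 2 be integers, let ψ_ℓ : [0,1) → [0,1] be the digit function ψ_ℓ(x) = Σ_{i=1}^∞ ξ_i b^{−i(ℓ−1)} (where ξ_i are the b-adic digits of x, not eventually b−1), C = ∫_0^1 ψ_ℓ(x) dx > 0, and A = {(x,y) ∈ [0,1]² : ψ_ℓ(x) ≥ y}. Fix an integer t ≥ 0. Then there exists a constant Δ > 0 and m_0 such that for all m ≥ m_0 and every (t,m,2)-net P in base b, with N = #(P ∩ A) and y_0,…,y_{N−1} the first coordinates of the points of P ∩ A, one has sup_{u ∈ [0,1]} |(1/N) Σ_{n=0}^{N−1} 1_{[0,u)}(y_n) − (1/C) ∫_0^u ψ_ℓ(z) dz| ≤ Δ · N^{−(1 − 1/ℓ)}. -/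

import Mathlib

open MeasureTheory Set

/-- The digit function `ψ_ℓ(x) = ∑_{i≥1} ξ_i b^{-i(ℓ-1)}`, where
`ξ_i = ⌊b^i x⌋ - b⌊b^{i-1} x⌋` are the `b`-adic digits of `x` (not eventually `b-1`). -/
noncomputable def psiDigit (b ℓ : ℕ) (x : ℝ) : ℝ :=
  ∑' i : ℕ, ((⌊(b : ℝ) ^ (i + 1) * x⌋ - (b : ℤ) * ⌊(b : ℝ) ^ i * x⌋ : ℤ) : ℝ)
    / (b : ℝ) ^ ((i + 1) * (ℓ - 1))

/-- The region `A = {(x,y) ∈ [0,1]² : ψ_ℓ(x) ≥ y}`. -/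
noncomputable def regionA (b ℓ : ℕ) : Set (ℝ × ℝ) :=
  {p | p.1 ∈ Icc (0 : ℝ) 1 ∧ p.2 ∈ Icc (0 : ℝ) 1 ∧ p.2 ≤ psiDigit b ℓ p.1}

/-- A 2-dimensional `b`-adic elementary interval of order `k`. -/
def IsElemInterval2 (b k : ℕ) (E : Set (ℝ × ℝ)) : Prop :=
  ∃ d₁ d₂ a₁ a₂ : ℕ, a₁ < b ^ d₁ ∧ a₂ < b ^ d₂ ∧ d₁ + d₂ = k ∧
    E = Ico ((a₁ : ℝ) / b ^ d₁) (((a₁ : ℝ) + 1) / b ^ d₁)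
          ×ˢ Ico ((a₂ : ℝ) / b ^ d₂) (((a₂ : ℝ) + 1) / b ^ d₂)

/-- `x` is a `(t,m,2)`-net in base `b`: `b^m` points of `[0,1)²` such that every `b`-adic
elementary interval of order at most `m - t` is fair with respect to the point set. -/
def IsNet2 (b tp m : ℕ) (x : Fin (b ^ m) → ℝ × ℝ) : Prop :=
  (∀ n, x n ∈ Ico (0 : ℝ) 1 ×ˢ Ico (0 : ℝ) 1) ∧
  ∀ k ≤ m - tp, ∀ E : Set (ℝ × ℝ), IsElemInterval2 b k E →
    (1 / (b ^ m : ℝ)) * ∑ n, E.indicator (fun _ => (1 : ℝ)) (x n) = (volume E).toReal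

/-!
The only property of `ψ_ℓ` that matters is that it is Hölder of exponent `ℓ - 1` for the `b`-adic
ultrametric. Put `M = m - t`. Over a `b`-adic interval `I` of length `b⁻ᵈ`, the net controls the
elementary boxes `I × J` of height `b⁻⁽ᴹ⁻ᵈ⁾`. As soon as `d ℓ ≥ M`, the density oscillates on `I`
by at most a constant times this height, so boundedly many of these boxes meet its graph and the
number of accepted points over `I` is within `O(1)` of its expected value.

Let `k = ⌈M / ℓ⌉`. Any `[0, u)` is exhausted, up to one incomplete interval of level `M`, by at most
`bᵏ` intervals of level `k` and `b` intervals of each level between `k` and `M`. The total error is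
`O(bᵏ + M) = O((bᵐ)^{1/ℓ})`, and since `N` is comparable to `bᵐ`, normalising gives the rate.
-/

section AdicIntervals

/-- The `b`-adic interval `[a b⁻ᵈ, (a + 1) b⁻ᵈ)`, written so that elementary intervals are literally
products of two of them. -/
def adicIco (b d a : ℕ) : Set ℝ :=
  Ico ((a : ℝ) / b ^ d) (((a : ℝ) + 1) / b ^ d)

variable {b d a : ℕ}

lemma adicIco_zero_zero : adicIco b 0 0 = Ico 0 1 := by
  simp [adicIco]

lemma measurableSet_adicIco : MeasurableSet (adicIco b d a) :=
  measurableSet_Ico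

lemma div_pow_le_add_one_div_pow : (a : ℝ) / b ^ d ≤ ((a : ℝ) + 1) / b ^ d := by
  gcongr
  simp

lemma adicIco_subset_Ico (ha : a < b ^ d) : adicIco b d a ⊆ Ico 0 1 := by
  refine Ico_subset_Ico (by positivity) (div_le_one_of_le₀ ?_ (by positivity))
  exact_mod_cast ha

lemma volume_real_adicIco : volume.real (adicIco b d a) = ((b : ℝ) ^ d)⁻¹ := by
  rw [adicIco, Real.volume_real_Ico_of_le div_pow_le_add_one_div_pow]
  ring

variable [NeZero b]

lemma div_pow_mem_adicIco : (a : ℝ) / b ^ d ∈ adicIco b d a := by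
  have := NeZero.pos b
  refine ⟨le_rfl, ?_⟩
  gcongr
  simp

lemma mem_adicIco_iff_floor_eq {x : ℝ} (hx : 0 ≤ x) :
    x ∈ adicIco b d a ↔ ⌊x * b ^ d⌋₊ = a := by
  have := NeZero.pos b
  rw [Nat.floor_eq_iff (by positivity), adicIco, mem_Ico, div_le_iff₀ (by positivity),
    lt_div_iff₀ (by positivity)]

lemma floor_mul_pow_eq_floor_div {i : ℕ} (hi : i ≤ d) (x : ℝ) :
    ⌊x * b ^ i⌋₊ = ⌊x * b ^ d⌋₊ / b ^ (d - i) := by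
  rw [← Nat.floor_div_natCast, ← Nat.add_sub_of_le hi, pow_add]
  congr 1
  push_cast
  field_simp
  simp

lemma digits_eq_of_mem_adicIco {x y : ℝ} (hx : x ∈ adicIco b d a) (hy : y ∈ adicIco b d a)
    {i : ℕ} (hi : i < d) : Real.digits x b i = Real.digits y b i := by
  have nonneg {z : ℝ} (hz : z ∈ adicIco b d a) : 0 ≤ z := le_trans (by positivity) hz.1
  rw [Real.digits, Real.digits, floor_mul_pow_eq_floor_div hi, floor_mul_pow_eq_floor_div hi,
    (mem_adicIco_iff_floor_eq (nonneg hx)).1 hx, (mem_adicIco_iff_floor_eq (nonneg hy)).1 hy]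

end AdicIntervals

section AdicTelescoping

variable {E : Type*} [PseudoMetricSpace E] {K : ℝ}

lemma dist_le_sub_mul_of_dist_succ_le {G : ℕ → E} {p q : ℕ} (hpq : p ≤ q)
    (hG : ∀ i, p ≤ i → i < q → dist (G i) (G (i + 1)) ≤ K) :
    dist (G p) (G q) ≤ ((q : ℝ) - p) * K := by
  have := dist_le_Ico_sum_of_dist_le (f := G) hpq (d := fun _ ↦ K) (hG _ · ·)
  simpa [Nat.cast_sub hpq] using this

variable {b : ℕ} [NeZero b] {F : ℝ → E} {u : ℝ}

lemma dist_adic_truncation_succ_le {d : ℕ} (hK : 0 ≤ K)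
    (hF : ∀ a < b ^ (d + 1),
      dist (F ((a : ℝ) / b ^ (d + 1))) (F (((a : ℝ) + 1) / b ^ (d + 1))) ≤ K)
    (hu : ⌊u * b ^ (d + 1)⌋₊ ≤ b ^ (d + 1)) :
    dist (F (⌊u * b ^ d⌋₊ / b ^ d)) (F (⌊u * b ^ (d + 1)⌋₊ / b ^ (d + 1))) ≤ b * K := by
  have := NeZero.pos b
  set q := ⌊u * b ^ (d + 1)⌋₊
  have hdiv : ⌊u * b ^ d⌋₊ = q / b := by
    simpa using floor_mul_pow_eq_floor_div (b := b) d.le_succ u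
  have hstart : (⌊u * b ^ d⌋₊ : ℝ) / b ^ d = (b * (q / b) : ℕ) / b ^ (d + 1) := by
    rw [hdiv, pow_succ']
    push_cast
    field_simp
  have hmod : (q : ℝ) - (b * (q / b) : ℕ) ≤ b := by
    have : q ≤ b + b * (q / b) := by linarith [Nat.div_add_mod q b, Nat.mod_lt q this]
    rw [sub_le_iff_le_add]
    exact_mod_cast this
  rw [hstart]
  refine (dist_le_sub_mul_of_dist_succ_le (G := fun a : ℕ ↦ F ((a : ℝ) / b ^ (d + 1)))
    (Nat.mul_div_le q b) fun i _ hi ↦ ?_).trans (by gcongr)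
  simpa using hF i (by omega)

lemma dist_zero_adic_truncation_le {k M : ℕ} (hkM : k ≤ M)
    (hF : ∀ d, k ≤ d → d ≤ M → ∀ a < b ^ d,
      dist (F ((a : ℝ) / b ^ d)) (F (((a : ℝ) + 1) / b ^ d)) ≤ K)
    (hu : u ≤ 1) :
    dist (F 0) (F (⌊u * b ^ M⌋₊ / b ^ M)) ≤ (b ^ k + b * ((M : ℝ) - k)) * K := by
  have := NeZero.pos b
  have hK : 0 ≤ K := dist_nonneg.trans (hF k le_rfl hkM 0 (by positivity))
  have hfloor (d : ℕ) : ⌊u * b ^ d⌋₊ ≤ b ^ d :=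
    Nat.floor_le_of_le (by push_cast; exact mul_le_of_le_one_left (by positivity) hu)
  have hcoarse : dist (F 0) (F (⌊u * b ^ k⌋₊ / b ^ k)) ≤ b ^ k * K := by
    have hwalk := dist_le_sub_mul_of_dist_succ_le (G := fun a : ℕ ↦ F ((a : ℝ) / b ^ k))
      (K := K) (Nat.zero_le ⌊u * b ^ k⌋₊) fun i _ hi ↦ by
        simpa using hF k le_rfl hkM i (hi.trans_le (hfloor k))
    simp only [Nat.cast_zero, zero_div, sub_zero] at hwalk
    refine hwalk.trans ?_
    gcongr
    exact_mod_cast hfloor k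
  have hfine := dist_le_sub_mul_of_dist_succ_le (G := fun d : ℕ ↦ F (⌊u * b ^ d⌋₊ / b ^ d)) hkM
    fun d hkd hdM ↦ dist_adic_truncation_succ_le hK (hF (d + 1) (by omega) hdM) (hfloor _)
  linarith [dist_triangle (F 0) (F (⌊u * b ^ k⌋₊ / b ^ k)) (F (⌊u * b ^ M⌋₊ / b ^ M))]

end AdicTelescoping

section NetCounting

lemma sum_indicator_one_eq_ncard_preimage {ι α : Type*} [Fintype ι] (g : ι → α) (S : Set α) :
    ∑ i, S.indicator (fun _ ↦ (1 : ℝ)) (g i) = (g ⁻¹' S).ncard := by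
  classical
  simp [indicator_apply, Finset.sum_boole, Set.ncard_eq_toFinset_card']

namespace IsNet2

variable {b t m : ℕ} {x : Fin (b ^ m) → ℝ × ℝ} {d e a : ℕ}

lemma ncard_preimage_box [NeZero b] (hx : IsNet2 b t m x) (hde : d + e + t = m)
    (ha : a < b ^ d) {j : ℕ} (hj : j < b ^ e) :
    (x ⁻¹' (adicIco b d a ×ˢ adicIco b e j)).ncard = b ^ t := by
  have := NeZero.pos b
  have hfair := hx.2 (d + e) (by omega) _ ⟨d, e, a, j, ha, hj, rfl, rfl⟩
  change _ * ∑ n, (adicIco b d a ×ˢ adicIco b e j).indicator _ (x n) =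
    volume.real (adicIco b d a ×ˢ adicIco b e j) at hfair
  rw [sum_indicator_one_eq_ncard_preimage, Measure.volume_eq_prod, measureReal_prod_prod,
    volume_real_adicIco, volume_real_adicIco] at hfair
  have hpow : (b : ℝ) ^ m = b ^ d * b ^ e * b ^ t := by rw [← hde, pow_add, pow_add]
  rw [hpow] at hfair
  field_simp at hfair
  exact_mod_cast hfair

variable [NeZero b] (hx : IsNet2 b t m x) (hde : d + e + t = m) (ha : a < b ^ d)
include hx hde ha

lemma ncard_preimage_adicIco_prod_Ico {j : ℕ} (hj : j ≤ b ^ e) :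
    (x ⁻¹' (adicIco b d a ×ˢ Ico 0 ((j : ℝ) / b ^ e))).ncard = j * b ^ t := by
  induction j with
  | zero => simp
  | succ j ih =>
    have hsplit : Ico 0 (((j + 1 : ℕ) : ℝ) / b ^ e) = Ico 0 ((j : ℝ) / b ^ e) ∪ adicIco b e j := by
      rw [adicIco, Ico_union_Ico_eq_Ico (by positivity) div_pow_le_add_one_div_pow, Nat.cast_succ]
    have hdisj : Disjoint (Ico 0 ((j : ℝ) / b ^ e)) (adicIco b e j) :=
      Ico_disjoint_Ico_same
    rw [hsplit, prod_union, preimage_union, ncard_union_eq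
      ((hdisj.set_prod_right _ _).preimage x), ih (by omega),
      hx.ncard_preimage_box hde ha (by omega), Nat.succ_mul]

lemma sub_one_mul_le_ncard_preimage {c : ℝ} (hc : c ≤ 1) :
    (c * b ^ e - 1) * b ^ t ≤ (x ⁻¹' (adicIco b d a ×ˢ Ico 0 c)).ncard := by
  have := NeZero.pos b
  rcases le_or_gt c 0 with hc0 | hc0
  · refine le_trans (mul_nonpos_of_nonpos_of_nonneg ?_ (by positivity)) (Nat.cast_nonneg _)
    nlinarith [pow_pos (Nat.cast_pos (α := ℝ).2 this) e]
  set j := ⌊c * b ^ e⌋₊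
  have hjc : (j : ℝ) ≤ c * b ^ e := Nat.floor_le (by positivity)
  have hj : j ≤ b ^ e := by
    exact_mod_cast hjc.trans (mul_le_of_le_one_left (by positivity) hc)
  calc (c * b ^ e - 1) * b ^ t ≤ j * (b : ℝ) ^ t := by
        gcongr
        exact (Nat.sub_one_lt_floor _).le
    _ = (x ⁻¹' (adicIco b d a ×ˢ Ico 0 ((j : ℝ) / b ^ e))).ncard := by
        rw [hx.ncard_preimage_adicIco_prod_Ico hde ha hj, Nat.cast_mul, Nat.cast_pow]
    _ ≤ _ := by
        gcongr
        · exact toFinite _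
        · rwa [div_le_iff₀ (by positivity)]

lemma ncard_preimage_le_add_one_mul {c : ℝ} (hc : 0 ≤ c) :
    (x ⁻¹' (adicIco b d a ×ˢ Icc 0 c)).ncard ≤ (c * b ^ e + 1) * b ^ t := by
  have := NeZero.pos b
  set j := min (⌊c * b ^ e⌋₊ + 1) (b ^ e)
  have hsub : x ⁻¹' (adicIco b d a ×ˢ Icc 0 c) ⊆
      x ⁻¹' (adicIco b d a ×ˢ Ico 0 ((j : ℝ) / b ^ e)) := by
    rintro n ⟨hn, hn0, hnc⟩
    refine ⟨hn, hn0, ?_⟩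
    rw [lt_div_iff₀ (by positivity), Nat.cast_min, lt_min_iff]
    constructor
    · push_cast
      exact (mul_le_mul_of_nonneg_right hnc (by positivity)).trans_lt (Nat.lt_floor_add_one _)
    · push_cast
      exact mul_lt_of_lt_one_left (by positivity) (hx.1 n).2.2
  calc ((x ⁻¹' (adicIco b d a ×ˢ Icc 0 c)).ncard : ℝ)
      ≤ (x ⁻¹' (adicIco b d a ×ˢ Ico 0 ((j : ℝ) / b ^ e))).ncard := by
        gcongr
        exact toFinite _
    _ = j * (b : ℝ) ^ t := by
        rw [hx.ncard_preimage_adicIco_prod_Ico hde ha (min_le_right _ _), Nat.cast_mul,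
          Nat.cast_pow]
    _ ≤ (c * b ^ e + 1) * b ^ t := by
        gcongr
        calc (j : ℝ) ≤ ⌊c * b ^ e⌋₊ + 1 := 
            (Nat.cast_le.2 (min_le_left _ _)).trans_eq (Nat.cast_succ _)
          _ ≤ c * b ^ e + 1 := by gcongr; exact Nat.floor_le (by positivity)

end IsNet2

end NetCounting

section LocalDiscrepancy

/-- The part of the unit square below the graph of `f`, on which the acceptance-rejection sampler
accepts; `regionA b ℓ` is the region under `psiDigit b ℓ`. -/
def regionUnder (f : ℝ → ℝ) : Set (ℝ × ℝ) :=
  {p | p.1 ∈ Icc (0 : ℝ) 1 ∧ p.2 ∈ Icc (0 : ℝ) 1 ∧ p.2 ≤ f p.1}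

/-- The unnormalised local discrepancy over `J` of the points accepted by the sampler with density
`f`: the number of accepted points with first coordinate in `J`, minus its expected value. -/
noncomputable def localDiscrepancy {n : ℕ} (f : ℝ → ℝ) (x : Fin n → ℝ × ℝ) (J : Set ℝ) : ℝ :=
  (x ⁻¹' (regionUnder f ∩ Prod.fst ⁻¹' J)).ncard - n * ∫ z in J, f z

variable {f : ℝ → ℝ}

lemma localDiscrepancy_union {n : ℕ} (x : Fin n → ℝ × ℝ) {I J : Set ℝ} (hIJ : Disjoint I J)
    (hJ : MeasurableSet J) (hfI : IntegrableOn f I) (hfJ : IntegrableOn f J) :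
    localDiscrepancy f x (I ∪ J) = localDiscrepancy f x I + localDiscrepancy f x J := by
  have hdisj : Disjoint (x ⁻¹' (regionUnder f ∩ Prod.fst ⁻¹' I))
      (x ⁻¹' (regionUnder f ∩ Prod.fst ⁻¹' J)) :=
    ((hIJ.preimage Prod.fst).mono inter_subset_right inter_subset_right).preimage x
  simp only [localDiscrepancy, preimage_union, inter_union_distrib_left]
  rw [ncard_union_eq hdisj, setIntegral_union hIJ hJ hfI hfJ]
  push_cast
  ring

lemma dist_localDiscrepancy_Ico {n : ℕ} (x : Fin n → ℝ × ℝ) (hf : IntegrableOn f (Ico 0 1))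
    {u v : ℝ} (hu : 0 ≤ u) (huv : u ≤ v) (hv : v ≤ 1) :
    dist (localDiscrepancy f x (Ico 0 u)) (localDiscrepancy f x (Ico 0 v)) =
      |localDiscrepancy f x (Ico u v)| := by
  rw [← Ico_union_Ico_eq_Ico hu huv, localDiscrepancy_union x Ico_disjoint_Ico_same
    measurableSet_Ico (hf.mono_set (Ico_subset_Ico_right (huv.trans hv)))
    (hf.mono_set (Ico_subset_Ico hu hv)), dist_self_add_right, Real.norm_eq_abs]

/-- `f` is Hölder of exponent `α` with constant `L` for the `b`-adic ultrametric on `[0, 1)`: its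
oscillation on each `b`-adic interval of length `b⁻ᵈ` is at most `L (b⁻ᵈ)ᵅ`. -/
def IsAdicHolder (b : ℕ) (L α : ℝ) (f : ℝ → ℝ) : Prop :=
  ∀ d a : ℕ, a < b ^ d → ∀ x ∈ adicIco b d a, ∀ y ∈ adicIco b d a,
    |f x - f y| ≤ L * (((b : ℝ) ^ d)⁻¹) ^ α

lemma IsAdicHolder.nonneg {b : ℕ} {L α : ℝ} (hf : IsAdicHolder b L α f) : 0 ≤ L := by
  have h0 : (0 : ℝ) ∈ adicIco b 0 0 := by simp [adicIco]
  simpa using hf 0 0 (by simp) 0 h0 0 h0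

lemma setIntegral_adicIco_mem_Icc {b d a : ℕ} {v w : ℝ} (hf : IntegrableOn f (adicIco b d a))
    (hvw : ∀ z ∈ adicIco b d a, f z ∈ Icc v w) :
    ∫ z in adicIco b d a, f z ∈ Icc (v * ((b : ℝ) ^ d)⁻¹) (w * ((b : ℝ) ^ d)⁻¹) := by
  have hfin : volume (adicIco b d a) ≠ ⊤ := measure_Ico_lt_top.ne
  rw [← volume_real_adicIco (a := a)]
  constructor
  · exact setIntegral_ge_of_const_le_real measurableSet_adicIco hfin (fun z hz ↦ (hvw z hz).1) hf
  · refine (setIntegral_mono_on hf (integrableOn_const hfin) measurableSet_adicIco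
      fun z hz ↦ (hvw z hz).2).trans_eq ?_
    rw [setIntegral_const, smul_eq_mul, mul_comm]

namespace IsNet2

variable {b t m : ℕ} [NeZero b] {x : Fin (b ^ m) → ℝ × ℝ} {d e a : ℕ}

lemma ncard_preimage_regionUnder_mem_Icc (hx : IsNet2 b t m x) (hde : d + e + t = m)
    (ha : a < b ^ d) {v w : ℝ} (hf : ∀ z ∈ adicIco b d a, f z ∈ Icc v w ∩ Icc 0 1) :
    ((x ⁻¹' (regionUnder f ∩ Prod.fst ⁻¹' adicIco b d a)).ncard : ℝ) ∈
      Icc ((v * b ^ e - 1) * b ^ t) ((w * b ^ e + 1) * b ^ t) := by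
  have hleft := hf _ (div_pow_mem_adicIco (b := b) (d := d) (a := a))
  have hlower : adicIco b d a ×ˢ Ico 0 v ⊆ regionUnder f ∩ Prod.fst ⁻¹' adicIco b d a := by
    rintro p ⟨hp, hp0, hpv⟩
    have hfp := hf p.1 hp
    have hpf : p.2 ≤ f p.1 := hpv.le.trans hfp.1.1
    exact ⟨⟨Ico_subset_Icc_self (adicIco_subset_Ico ha hp), ⟨hp0, hpf.trans hfp.2.2⟩, hpf⟩, hp⟩
  have hupper : regionUnder f ∩ Prod.fst ⁻¹' adicIco b d a ⊆ adicIco b d a ×ˢ Icc 0 w :=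
    fun p hp ↦ ⟨hp.2, hp.1.2.1.1, hp.1.2.2.trans (hf p.1 hp.2).1.2⟩
  constructor
  · refine (hx.sub_one_mul_le_ncard_preimage hde ha (hleft.1.1.trans hleft.2.2)).trans ?_
    gcongr
    exact toFinite _
  · refine le_trans ?_ (hx.ncard_preimage_le_add_one_mul hde ha (hleft.2.1.trans hleft.1.2))
    gcongr
    exact toFinite _

lemma abs_localDiscrepancy_adicIco_le (hx : IsNet2 b t m x) (hde : d + e + t = m)
    (ha : a < b ^ d) {v w : ℝ} (hf : IntegrableOn f (adicIco b d a))
    (hvw : ∀ z ∈ adicIco b d a, f z ∈ Icc v w ∩ Icc 0 1) :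
    |localDiscrepancy f x (adicIco b d a)| ≤ ((w - v) * b ^ e + 1) * b ^ t := by
  have := NeZero.pos b
  have hcount := hx.ncard_preimage_regionUnder_mem_Icc hde ha hvw
  have hint := setIntegral_adicIco_mem_Icc hf fun z hz ↦ (hvw z hz).1
  have hpow : (b : ℝ) ^ m = b ^ d * (b ^ e * b ^ t) := by rw [← hde, pow_add, pow_add, mul_assoc]
  have hmean : (b : ℝ) ^ m * ∫ z in adicIco b d a, f z ∈
      Icc (v * b ^ e * b ^ t) (w * b ^ e * b ^ t) := by
    have hscale (c : ℝ) : c * b ^ e * b ^ t = b ^ m * (c * ((b : ℝ) ^ d)⁻¹) := by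
      rw [hpow]
      field_simp
    rw [hscale, hscale]
    exact ⟨by gcongr; exact hint.1, by gcongr; exact hint.2⟩
  rw [localDiscrepancy, Nat.cast_pow, abs_le]
  constructor <;> linarith [hcount.1, hcount.2, hmean.1, hmean.2]

lemma abs_localDiscrepancy_le_of_subset_adicIco (hx : IsNet2 b t m x) (hdt : d + t = m)
    (ha : a < b ^ d) (hf : IntegrableOn f (adicIco b d a))
    (hf01 : ∀ z ∈ adicIco b d a, f z ∈ Icc 0 1) {J : Set ℝ}
    (hJ : MeasurableSet J) (hJI : J ⊆ adicIco b d a) :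
    |localDiscrepancy f x J| ≤ b ^ t := by
  have := NeZero.pos b
  have hcount : (x ⁻¹' (regionUnder f ∩ Prod.fst ⁻¹' J)).ncard ≤ (b : ℝ) ^ t := by
    have hbox := hx.ncard_preimage_box (e := 0) hdt ha zero_lt_one
    have hsub : x ⁻¹' (regionUnder f ∩ Prod.fst ⁻¹' J) ⊆
        x ⁻¹' (adicIco b d a ×ˢ adicIco b 0 0) := fun n hn ↦
      ⟨hJI hn.2, adicIco_zero_zero ▸ (hx.1 n).2⟩
    exact_mod_cast (ncard_le_ncard hsub (toFinite _)).trans_eq hbox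
  have hint0 : 0 ≤ ∫ z in J, f z := setIntegral_nonneg hJ fun z hz ↦ (hf01 z (hJI hz)).1
  have hint1 : (b : ℝ) ^ m * ∫ z in J, f z ≤ b ^ t := by
    calc (b : ℝ) ^ m * ∫ z in J, f z ≤ b ^ m * (1 * ((b : ℝ) ^ d)⁻¹) := by
          gcongr
          exact (setIntegral_mono_set hf (ae_restrict_of_forall_mem measurableSet_adicIco
            fun z hz ↦ (hf01 z hz).1) (.of_forall hJI)).trans
            (setIntegral_adicIco_mem_Icc hf hf01).2
      _ = b ^ t := by
          rw [← hdt, pow_add]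
          field_simp
  rw [localDiscrepancy, Nat.cast_pow]
  exact abs_sub_le_of_nonneg_of_le (by positivity) hcount (by positivity) hint1

end IsNet2

end LocalDiscrepancy

section PowerBounds

variable {β ℓ : ℝ}

lemma pow_ceil_div_le (hβ : 1 ≤ β) (hℓ : 0 < ℓ) (M : ℕ) :
    β ^ ⌈M / ℓ⌉₊ ≤ β * (β ^ M) ^ (1 / ℓ) := by
  calc β ^ ⌈M / ℓ⌉₊ ≤ β ^ (M / ℓ + 1) := by
        rw [← Real.rpow_natCast]
        exact Real.rpow_le_rpow_of_exponent_le hβ (Nat.ceil_lt_add_one (by positivity)).le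
    _ = β * (β ^ M) ^ (1 / ℓ) := by
        rw [Real.rpow_add_one (by positivity), mul_comm, ← Real.rpow_natCast_mul (by positivity),
          mul_one_div]

lemma natCast_le_mul_pow_rpow (hβ : 1 < β) (hℓ : 0 < ℓ) (m : ℕ) :
    (m : ℝ) ≤ ℓ / Real.log β * (β ^ m) ^ (1 / ℓ) := by
  have hlog : Real.log (β ^ m) ≤ (β ^ m) ^ (1 / ℓ) / (1 / ℓ) :=
    Real.log_le_rpow_div (by positivity) (by positivity)
  rw [Real.log_pow, div_div_eq_mul_div, div_one, ← le_div_iff₀ (Real.log_pos hβ)] at hlog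
  exact hlog.trans_eq (by ring)

end PowerBounds

section StarDiscrepancy

variable {f : ℝ → ℝ} {b t m : ℕ} {x : Fin (b ^ m) → ℝ × ℝ} {L ℓ : ℝ}

lemma IsAdicHolder.abs_sub_le_div_pow (hf : IsAdicHolder b L (ℓ - 1) f) (hb : 1 ≤ b) {d e a : ℕ}
    (hde : ((d + e : ℕ) : ℝ) ≤ d * ℓ) (ha : a < b ^ d) {y z : ℝ} (hy : y ∈ adicIco b d a)
    (hz : z ∈ adicIco b d a) : |f y - f z| ≤ L / b ^ e := by
  have hb0 : (0 : ℝ) < b := by exact_mod_cast hb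
  have hexp : (e : ℝ) ≤ d * (ℓ - 1) := by
    push_cast at hde
    linarith
  calc |f y - f z| ≤ L * (((b : ℝ) ^ d)⁻¹) ^ (ℓ - 1) := hf d a ha y hy z hz
    _ = L / (b : ℝ) ^ (d * (ℓ - 1)) := by
        rw [Real.inv_rpow (by positivity), ← Real.rpow_natCast, ← Real.rpow_mul hb0.le,
          div_eq_mul_inv]
    _ ≤ L / b ^ e := by
        rw [← Real.rpow_natCast (b : ℝ) e]
        have := hf.nonneg
        gcongr
        exact_mod_cast hb

namespace IsNet2

variable [NeZero b]

lemma abs_localDiscrepancy_adicIco_le_of_isAdicHolder (hx : IsNet2 b t m x) {d e a : ℕ}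
    (hde : d + e + t = m) (hdℓ : ((d + e : ℕ) : ℝ) ≤ d * ℓ) (ha : a < b ^ d)
    (hf : IntegrableOn f (Ico 0 1)) (hf01 : ∀ z ∈ Ico 0 1, f z ∈ Icc 0 1)
    (hfH : IsAdicHolder b L (ℓ - 1) f) :
    |localDiscrepancy f x (adicIco b d a)| ≤ (2 * L + 1) * b ^ t := by
  have := NeZero.pos b
  set c := f ((a : ℝ) / b ^ d)
  have hrange : ∀ z ∈ adicIco b d a, f z ∈ Icc (c - L / b ^ e) (c + L / b ^ e) ∩ Icc 0 1 := by
    refine fun z hz ↦ ⟨?_, hf01 z (adicIco_subset_Ico ha hz)⟩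
    exact mem_Icc_iff_abs_le.1 (hfH.abs_sub_le_div_pow this hdℓ ha div_pow_mem_adicIco hz)
  refine (hx.abs_localDiscrepancy_adicIco_le hde ha (hf.mono_set (adicIco_subset_Ico ha))
    hrange).trans_eq ?_
  field_simp
  ring

lemma abs_localDiscrepancy_Ico_zero_le (hx : IsNet2 b t m x) {k M : ℕ} (hMt : M + t = m)
    (hkM : k ≤ M) (hℓ : 0 ≤ ℓ) (hMk : (M : ℝ) ≤ k * ℓ) (hf : IntegrableOn f (Ico 0 1))
    (hf01 : ∀ z ∈ Ico 0 1, f z ∈ Icc 0 1) (hfH : IsAdicHolder b L (ℓ - 1) f) {u : ℝ}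
    (hu : u ∈ Icc 0 1) :
    |localDiscrepancy f x (Ico 0 u)| ≤
      (b ^ k + b * ((M : ℝ) - k)) * ((2 * L + 1) * b ^ t) + b ^ t := by
  have := NeZero.pos b
  set F : ℝ → ℝ := fun v ↦ localDiscrepancy f x (Ico 0 v) with hF
  set a := ⌊u * b ^ M⌋₊
  have hF0 : F 0 = 0 := by simp [hF, localDiscrepancy]
  have hau : (a : ℝ) / b ^ M ≤ u := by
    rw [div_le_iff₀ (by positivity)]
    exact Nat.floor_le (mul_nonneg hu.1 (by positivity))
  have hwalk : dist (F 0) (F (a / b ^ M)) ≤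
      (b ^ k + b * ((M : ℝ) - k)) * ((2 * L + 1) * b ^ t) := by
    refine dist_zero_adic_truncation_le hkM (fun d hkd hdM i hi ↦ ?_) hu.2
    rw [hF, dist_localDiscrepancy_Ico x hf (by positivity) div_pow_le_add_one_div_pow
      (div_le_one_of_le₀ (by exact_mod_cast hi) (by positivity))]
    refine hx.abs_localDiscrepancy_adicIco_le_of_isAdicHolder (e := M - d) (by omega) ?_ hi hf
      hf01 hfH
    rw [Nat.add_sub_cancel' hdM]
    exact hMk.trans (by gcongr)
  have hlast : dist (F (a / b ^ M)) (F u) ≤ b ^ t := by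
    rw [hF, dist_localDiscrepancy_Ico x hf (by positivity) hau hu.2]
    rcases hu.2.eq_or_lt with rfl | hu1
    · have : a = b ^ M := by simpa [a] using Nat.floor_natCast (R := ℝ) (b ^ M)
      simp [this, localDiscrepancy]
    · have ha : a < b ^ M := by
        rw [Nat.floor_lt (mul_nonneg hu.1 (by positivity))]
        exact_mod_cast mul_lt_of_lt_one_left (by positivity) hu1
      have hsub := adicIco_subset_Ico ha
      refine hx.abs_localDiscrepancy_le_of_subset_adicIco hMt ha (hf.mono_set hsub)
        (fun z hz ↦ hf01 z (hsub hz)) measurableSet_Ico (Ico_subset_Ico_right ?_)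
      rw [le_div_iff₀ (by positivity)]
      exact (Nat.lt_floor_add_one _).le
  have := (dist_triangle (F 0) (F (a / b ^ M)) (F u)).trans (add_le_add hwalk hlast)
  rwa [hF0, dist_zero_left] at this

lemma abs_localDiscrepancy_Ico_zero_le_rpow (hb : 2 ≤ b) (hx : IsNet2 b t m x) (htm : t ≤ m)
    (hℓ : 1 ≤ ℓ) (hf : IntegrableOn f (Ico 0 1)) (hf01 : ∀ z ∈ Ico 0 1, f z ∈ Icc 0 1)
    (hfH : IsAdicHolder b L (ℓ - 1) f) {u : ℝ} (hu : u ∈ Icc 0 1) :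
    |localDiscrepancy f x (Ico 0 u)| ≤
      (2 * L + 1) * b ^ t * (b + b * (ℓ / Real.log b) + 1) * ((b : ℝ) ^ m) ^ (1 / ℓ) := by
  obtain ⟨M, rfl⟩ := Nat.exists_eq_add_of_le' htm
  have hb1 : (1 : ℝ) < b := by exact_mod_cast hb
  have hℓ0 : 0 < ℓ := by linarith
  have hL := hfH.nonneg
  set k := ⌈M / ℓ⌉₊
  set n := (b : ℝ) ^ (M + t)
  have hkM : k ≤ M := Nat.ceil_le.2 (div_le_self (by positivity) hℓ)
  have hMk : (M : ℝ) ≤ k * ℓ := (div_le_iff₀ hℓ0).1 (Nat.le_ceil _)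
  have hcoarse : (b : ℝ) ^ k ≤ b * n ^ (1 / ℓ) := by
    refine (pow_ceil_div_le hb1.le hℓ0 M).trans ?_
    gcongr
    exact pow_le_pow_right₀ hb1.le (Nat.le_add_right M t)
  have hfine : (M : ℝ) - k ≤ ℓ / Real.log b * n ^ (1 / ℓ) := by
    have := natCast_le_mul_pow_rpow hb1 hℓ0 (M + t)
    push_cast at this
    linarith [k.cast_nonneg (α := ℝ), t.cast_nonneg (α := ℝ)]
  have hone : 1 ≤ n ^ (1 / ℓ) := Real.one_le_rpow (one_le_pow₀ hb1.le) (by positivity)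
  calc |localDiscrepancy f x (Ico 0 u)|
      ≤ (b ^ k + b * ((M : ℝ) - k)) * ((2 * L + 1) * b ^ t) + b ^ t :=
        hx.abs_localDiscrepancy_Ico_zero_le rfl hkM hℓ0.le hMk hf hf01 hfH hu
    _ ≤ (b * n ^ (1 / ℓ) + b * (ℓ / Real.log b * n ^ (1 / ℓ))) * ((2 * L + 1) * b ^ t) +
          n ^ (1 / ℓ) * ((2 * L + 1) * b ^ t) := by
        gcongr
        calc (b : ℝ) ^ t ≤ (2 * L + 1) * b ^ t :=
              le_mul_of_one_le_left (by positivity) (by linarith)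
          _ ≤ _ := le_mul_of_one_le_left (by positivity) hone
    _ = _ := by ring

end IsNet2

end StarDiscrepancy

section DigitFunction

variable {b ℓ : ℕ}

lemma floor_pow_succ_mul_sub_eq_digits [NeZero b] {x : ℝ} (hx : 0 ≤ x) (i : ℕ) :
    ⌊(b : ℝ) ^ (i + 1) * x⌋ - (b : ℤ) * ⌊(b : ℝ) ^ i * x⌋ = Real.digits x b i := by
  have hfloor (j : ℕ) : ⌊(b : ℝ) ^ j * x⌋ = (⌊x * b ^ j⌋₊ : ℤ) := by
    rw [mul_comm, Int.natCast_floor_eq_floor (by positivity)]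
  have hdiv : ⌊x * b ^ i⌋₊ = ⌊x * b ^ (i + 1)⌋₊ / b := by
    simpa using floor_mul_pow_eq_floor_div (b := b) i.le_succ x
  rw [hfloor, hfloor, hdiv, Real.digits, Fin.val_ofNat]
  push_cast
  exact sub_eq_of_eq_add (Int.emod_add_mul_ediv _ _).symm

lemma measurable_digits [NeZero b] (i : ℕ) : Measurable fun x : ℝ ↦ Real.digits x b i :=
  (Measurable.of_discrete (f := Fin.ofNat b)).comp
    (Nat.measurable_floor.comp (measurable_id.mul_const _))

variable [NeZero b] (hℓ : 2 ≤ ℓ)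
include hℓ

/- The base-`b` digits of `x` are reread as digits in the larger base `b ^ (ℓ - 1)`. -/
lemma psiDigit_eq_ofDigits {x : ℝ} (hx : 0 ≤ x) :
    psiDigit b ℓ x = Real.ofDigits fun i ↦
      Fin.castLE (Nat.le_self_pow (by omega : ℓ - 1 ≠ 0) b) (Real.digits x b i) := by
  refine tsum_congr fun i ↦ ?_
  rw [floor_pow_succ_mul_sub_eq_digits hx, Real.ofDigitsTerm, Fin.val_castLE, div_eq_mul_inv,
    Int.cast_natCast, Nat.cast_pow, ← pow_mul, mul_comm (ℓ - 1)]

lemma psiDigit_mem_Icc {x : ℝ} (hx : 0 ≤ x) : psiDigit b ℓ x ∈ Icc 0 1 := by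
  rw [psiDigit_eq_ofDigits hℓ hx]
  exact ⟨Real.ofDigits_nonneg _, Real.ofDigits_le_one _⟩

lemma isAdicHolder_psiDigit : IsAdicHolder b 1 ((ℓ : ℝ) - 1) (psiDigit b ℓ) := by
  intro d a ha x hx y hy
  rw [psiDigit_eq_ofDigits hℓ (adicIco_subset_Ico ha hx).1,
    psiDigit_eq_ofDigits hℓ (adicIco_subset_Ico ha hy).1]
  refine (Real.abs_ofDigits_sub_ofDigits_le (n := d) fun i hi ↦ ?_).trans_eq ?_
  · rw [digits_eq_of_mem_adicIco hx hy hi]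
  · rw [one_mul, ← Nat.cast_pred (by omega : 0 < ℓ), Real.rpow_natCast, Nat.cast_pow, inv_pow,
      pow_right_comm]

lemma integrableOn_psiDigit : IntegrableOn (psiDigit b ℓ) (Ico 0 1) := by
  have hmeas : Measurable fun x : ℝ ↦ Real.ofDigits fun i ↦
      Fin.castLE (Nat.le_self_pow (by omega : ℓ - 1 ≠ 0) b) (Real.digits x b i) := by
    refine Real.continuous_ofDigits.measurable.comp (measurable_pi_lambda _ fun i ↦ ?_)
    exact (Measurable.of_discrete (f := Fin.castLE (Nat.le_self_pow (by omega) b))).comp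
      (measurable_digits i)
  refine IntegrableOn.congr_fun ?_ (fun x hx ↦ (psiDigit_eq_ofDigits hℓ hx.1).symm)
    measurableSet_Ico
  refine Measure.integrableOn_of_bounded (M := 1) measure_Ico_lt_top.ne
    hmeas.aestronglyMeasurable (.of_forall fun x ↦ ?_)
  rw [Real.norm_of_nonneg (Real.ofDigits_nonneg _)]
  exact Real.ofDigits_le_one _

end DigitFunction

section Sampler

lemma abs_div_sub_div_le_mul_rpow {S N G C K n s : ℝ} (hs : 0 ≤ s) (hK : 0 ≤ K) (hn : 0 < n)
    (hC : 0 < C) (hG : G ∈ Icc 0 C) (hSG : |S - n * G| ≤ K * n ^ s)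
    (hNC : |N - n * C| ≤ K * n ^ s) (hKn : K * n ^ s ≤ n * C / 2) :
    |1 / N * S - 1 / C * G| ≤ 2 * K * (2 / C) ^ s * N ^ (-(1 - s)) := by
  have hnC := mul_pos hn hC
  have hN : n * C / 2 ≤ N := by linarith [(abs_le.1 hNC).1]
  have hN0 : 0 < N := by linarith
  have hGC : G / C ∈ Icc 0 1 := ⟨div_nonneg hG.1 hC.le, div_le_one_of_le₀ hG.2 hC.le⟩
  have hsplit : 1 / N * S - 1 / C * G = ((S - n * G) - G / C * (N - n * C)) / N := by
    field_simp
    ring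
  have hnN : n ≤ 2 / C * N := by
    rw [div_mul_eq_mul_div, le_div_iff₀ hC]
    linarith
  rw [hsplit, abs_div, abs_of_pos hN0]
  calc |(S - n * G) - G / C * (N - n * C)| / N
      ≤ (|S - n * G| + |G / C * (N - n * C)|) / N := by
        gcongr
        exact abs_sub _ _
    _ ≤ (K * n ^ s + 1 * (K * n ^ s)) / N := by
        rw [abs_mul, abs_of_nonneg hGC.1]
        gcongr
        exact hGC.2
    _ ≤ 2 * (K * (2 / C * N) ^ s) / N := by
        rw [one_mul, ← two_mul]
        gcongr
    _ = 2 * K * (2 / C) ^ s * N ^ (-(1 - s)) := by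
        rw [Real.mul_rpow (by positivity) hN0.le, neg_sub, Real.rpow_sub_one hN0.ne']
        ring

lemma eventually_mul_rpow_le_mul {s c : ℝ} (K : ℝ) (hs : s < 1) (hc : 0 < c) :
    ∀ᶠ y : ℝ in Filter.atTop, K * y ^ s ≤ c * y := by
  have htendsto := (tendsto_rpow_atTop (sub_pos.2 hs)).eventually_ge_atTop (K / c)
  filter_upwards [htendsto, Filter.eventually_gt_atTop 0] with y hy hy0
  calc K * y ^ s ≤ c * y ^ (1 - s) * y ^ s := by
        gcongr
        exact (div_le_iff₀' hc).1 hy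
    _ = c * y := by rw [mul_assoc, ← Real.rpow_add hy0, sub_add_cancel, Real.rpow_one]

lemma sum_indicator_fst_eq_ncard_preimage {ι κ α β : Type*} [Fintype κ] (x : ι → α × β)
    {A : Set (α × β)} (e : κ ≃ {i // x i ∈ A}) (J : Set α) :
    ∑ k, J.indicator (fun _ ↦ (1 : ℝ)) (x (e k)).1 = (x ⁻¹' (A ∩ Prod.fst ⁻¹' J)).ncard := by
  have himage : (Subtype.val ∘ e) '' ((fun k ↦ (x (e k)).1) ⁻¹' J) =
      x ⁻¹' (A ∩ Prod.fst ⁻¹' J) := by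
    ext i
    constructor
    · rintro ⟨k, hk, rfl⟩
      exact ⟨(e k).2, hk⟩
    · rintro ⟨hiA, hiJ⟩
      exact ⟨e.symm ⟨i, hiA⟩, by simpa using hiJ, by simp⟩
  rw [sum_indicator_one_eq_ncard_preimage (fun k ↦ (x (e k)).1), ← himage,
    ncard_image_of_injective _ (Subtype.val_injective.comp e.injective)]

lemma IsNet2.card_accepted_eq_ncard {b t m : ℕ} {x : Fin (b ^ m) → ℝ × ℝ} (hx : IsNet2 b t m x)
    (A : Set (ℝ × ℝ)) :
    Nat.card {n // x n ∈ A} = (x ⁻¹' (A ∩ Prod.fst ⁻¹' Ico 0 1)).ncard := by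
  have hfst : x ⁻¹' A ⊆ x ⁻¹' (Prod.fst ⁻¹' Ico 0 1) := fun n _ ↦ (hx.1 n).1
  rw [preimage_inter, inter_eq_left.2 hfst]
  exact Nat.card_coe_set_eq _

end Sampler

theorem star_discrepancy_psiDigit_net_general {b : ℕ} (hb : 2 ≤ b) {ℓ : ℝ} (hℓ : 1 < ℓ)
    {f : ℝ → ℝ} {L : ℝ} (hf : IntegrableOn f (Ico 0 1)) (hf01 : ∀ z ∈ Ico 0 1, f z ∈ Icc 0 1)
    (hfH : IsAdicHolder b L (ℓ - 1) f) {C : ℝ} (hC : C = ∫ z in Icc (0 : ℝ) 1, f z)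
    (hCpos : 0 < C) (t : ℕ) :
    ∃ Δ : ℝ, 0 < Δ ∧ ∃ m₀ : ℕ, ∀ m : ℕ, m₀ ≤ m →
      ∀ x : Fin (b ^ m) → ℝ × ℝ, IsNet2 b t m x →
      ∀ N : ℕ, N = Nat.card {n : Fin (b ^ m) // x n ∈ regionUnder f} →
      ∀ (y : Fin N → ℝ) (e : Fin N ≃ {n : Fin (b ^ m) // x n ∈ regionUnder f}),
        (∀ k, y k = (x (e k)).1) →
        ∀ u ∈ Icc (0 : ℝ) 1,
          |(1 / (N : ℝ)) * ∑ k, (Ico (0 : ℝ) u).indicator (fun _ => (1 : ℝ)) (y k)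
              - (1 / C) * ∫ z in Ico (0 : ℝ) u, f z|
            ≤ Δ * (N : ℝ) ^ (-(1 - 1 / ℓ)) := by
  have : NeZero b := ⟨by omega⟩
  have hb1 : (1 : ℝ) < b := by exact_mod_cast hb
  have hL := hfH.nonneg
  rw [integral_Icc_eq_integral_Ico] at hC
  set K := (2 * L + 1) * b ^ t * (b + b * (ℓ / Real.log b) + 1)
  obtain ⟨m₀, hm₀⟩ := Filter.eventually_atTop.1 ((Filter.eventually_ge_atTop t).and
    ((tendsto_pow_atTop_atTop_of_one_lt hb1).eventually
      (eventually_mul_rpow_le_mul K ((div_lt_one (by positivity)).2 hℓ) (half_pos hCpos))))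
  refine ⟨2 * K * (2 / C) ^ (1 / ℓ), by positivity, m₀, fun m hm x hx N hN y e hy u hu ↦ ?_⟩
  obtain ⟨htm, hKm⟩ := hm₀ m hm
  have hdisc {v : ℝ} (hv : v ∈ Icc 0 1) :
      |localDiscrepancy f x (Ico 0 v)| ≤ K * ((b : ℝ) ^ m) ^ (1 / ℓ) :=
    hx.abs_localDiscrepancy_Ico_zero_le_rpow hb htm hℓ.le hf hf01 hfH hv
  have hG : ∫ z in Ico 0 u, f z ∈ Icc 0 C := by
    have hsub : Ico 0 u ⊆ Ico 0 1 := Ico_subset_Ico_right hu.2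
    refine ⟨setIntegral_nonneg measurableSet_Ico fun z hz ↦ (hf01 z (hsub hz)).1, ?_⟩
    rw [hC]
    exact setIntegral_mono_set hf
      (ae_restrict_of_forall_mem measurableSet_Ico fun z hz ↦ (hf01 z hz).1) (.of_forall hsub)
  simp only [localDiscrepancy, Nat.cast_pow] at hdisc
  simp only [hy, sum_indicator_fst_eq_ncard_preimage]
  refine abs_div_sub_div_le_mul_rpow (by positivity) (by positivity) (by positivity) hCpos hG
    (hdisc hu) ?_ (by linarith)
  rw [hN, hx.card_accepted_eq_ncard, hC]
  exact hdisc (right_mem_Icc.2 zero_le_one)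

/-- **Convergence rate `N^{-(1-1/ℓ)}` for the digit density** (Example 1 of the paper):
for the target density `ψ_ℓ`, the acceptance-rejection sampler driven by `(t,m,2)`-nets in
base `b` produces samples `y_0,…,y_{N-1}` (the first coordinates of the accepted points)
whose star discrepancy with respect to `ψ_ℓ` is at most `Δ N^{-(1-1/ℓ)}`. -/
theorem star_discrepancy_psiDigit_net (b : ℕ) (hb : 2 ≤ b) (ℓ : ℕ) (hℓ : 2 ≤ ℓ)
    (C : ℝ) (hC : C = ∫ x in Icc (0 : ℝ) 1, psiDigit b ℓ x) (hCpos : 0 < C)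
    (tp : ℕ) :
    ∃ Δ : ℝ, 0 < Δ ∧ ∃ m₀ : ℕ, ∀ m : ℕ, m₀ ≤ m →
      ∀ x : Fin (b ^ m) → ℝ × ℝ, IsNet2 b tp m x →
      ∀ N : ℕ, N = Nat.card {n : Fin (b ^ m) // x n ∈ regionA b ℓ} →
      ∀ (y : Fin N → ℝ) (e : Fin N ≃ {n : Fin (b ^ m) // x n ∈ regionA b ℓ}),
        (∀ k, y k = (x (e k)).1) →
        ∀ u ∈ Icc (0 : ℝ) 1,
          |(1 / (N : ℝ)) * ∑ k, (Ico (0 : ℝ) u).indicator (fun _ => (1 : ℝ)) (y k)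
              - (1 / C) * ∫ z in Ico (0 : ℝ) u, psiDigit b ℓ z|
            ≤ Δ * (N : ℝ) ^ (-(1 - 1 / (ℓ : ℝ))) := by
  have : NeZero b := ⟨by omega⟩
  exact star_discrepancy_psiDigit_net_general hb (by exact_mod_cast hℓ)
    (integrableOn_psiDigit hℓ) (fun z hz ↦ psiDigit_mem_Icc hℓ hz.1) (isAdicHolder_psiDigit hℓ)
    hC hCpos tp
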